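/- arXiv:2101.01567 — 2 statements merged into one kernel-verified Lean document; each statement's English description precedes it below -/
import Mathlib

section
/- Let k ≥ 5 and let n = 2^k + 5. Then Z(n) ≡ 5 (mod 8). -/
/-!
The odd part of `(2 ^ k)!` is `3` modulo `8` for `k ≥ 2`: passing from `m!` to `(2 * m)!` multiplies
by `2 ^ m` and by the product of the odd numbers below `2 * m`, and when `8 ∣ 2 * m` that product
splits into blocks of four consecutive odd numbers, each block being `1 * 3 * 5 * 7 ≡ 1` modulo `8`
(`prod_odd_mod_eight`). Hence `(2 ^ k)! = 2 ^ (2 ^ k - 1) * u` with `u ≡ 3` (`two_pow_factorial`).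
Writing `2 ^ k = 32 * t`, the five further factors of `(2 ^ k + 5)!` contribute
`8 * (32 * t + 1) * (16 * t + 1) * (32 * t + 3) * (8 * t + 1) * (32 * t + 5)`,
whose odd part is `15 ≡ 7`.
So `(2 ^ k + 5)!` has the even 2-adic valuation `2 ^ k + 2` and odd part `3 * 7 ≡ 5`.
-/

open Nat in
/-- `Z n = n! / 4^⌊γ/2⌋` where `γ` is the 2-adic valuation of `n!`,
so that `n! = 4^⌊γ/2⌋ * Z n`. -/
def Z (n : ℕ) : ℕ := n ! / 4 ^ (padicValNat 2 (n !) / 2)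

open Nat in
theorem factorial_two_mul_eq (m : ℕ) :
    (2 * m)! = 2 ^ m * m ! * ∏ i ∈ Finset.range m, (2 * i + 1) := by
  induction m with
  | zero => simp
  | succ m ih =>
    rw [show 2 * (m + 1) = 2 * m + 1 + 1 by ring, Nat.factorial_succ, Nat.factorial_succ, ih,
      Finset.prod_range_succ, Nat.factorial_succ]
    ring

theorem prod_odd_mod_eight (j : ℕ) :
    (∏ i ∈ Finset.range (4 * j), (2 * i + 1)) % 8 = 1 := by
  induction j with
  | zero => simp
  | succ j ih =>
    rw [show 4 * (j + 1) = 4 * j + 1 + 1 + 1 + 1 by ring, Finset.prod_range_succ,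
      Finset.prod_range_succ, Finset.prod_range_succ, Finset.prod_range_succ]
    have h1 : 2 * (4 * j) + 1 ≡ 1 [MOD 8] := by unfold Nat.ModEq; omega
    have h2 : 2 * (4 * j + 1) + 1 ≡ 3 [MOD 8] := by unfold Nat.ModEq; omega
    have h3 : 2 * (4 * j + 1 + 1) + 1 ≡ 5 [MOD 8] := by unfold Nat.ModEq; omega
    have h4 : 2 * (4 * j + 1 + 1 + 1) + 1 ≡ 7 [MOD 8] := by unfold Nat.ModEq; omega
    have h0 : ∏ i ∈ Finset.range (4 * j), (2 * i + 1) ≡ 1 [MOD 8] := ih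
    exact (((h0.mul h1).mul h2).mul h3).mul h4

open Nat in
/-- The exponent is written on the left to avoid the truncated subtraction `2 ^ k - 1`. -/
theorem two_pow_factorial (k : ℕ) (hk : 2 ≤ k) :
    ∃ u : ℕ, 2 * (2 ^ k)! = 2 ^ 2 ^ k * u ∧ u % 8 = 3 := by
  induction k, hk using Nat.le_induction with
  | base => exact ⟨3, by decide, rfl⟩
  | succ k hk ih =>
    obtain ⟨u, hu, hu8⟩ := ih
    obtain ⟨j, hj⟩ : ∃ j, 2 ^ k = 4 * j := pow_dvd_pow 2 hk
    have hP := prod_odd_mod_eight j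
    rw [← hj] at hP
    refine ⟨u * ∏ i ∈ Finset.range (2 ^ k), (2 * i + 1), ?_, by rw [Nat.mul_mod, hu8, hP]⟩
    rw [pow_succ' 2 k, factorial_two_mul_eq, two_mul (2 ^ k), pow_add]
    linear_combination (2 ^ 2 ^ k * ∏ i ∈ Finset.range (2 ^ k), (2 * i + 1)) * hu

open Nat in
/-- An odd cofactor of a power of `4` in `n!` is `Z n`. -/
theorem Z_eq_of_factorial_eq {n a w : ℕ} (h : n ! = 4 ^ a * w) (hw : w % 2 = 1) : Z n = w := by
  have hv : padicValNat 2 (n !) = 2 * a := by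
    rw [h, show 4 ^ a = 2 ^ (2 * a) by rw [pow_mul]; norm_num,
      padicValNat.mul (by positivity) (by omega), padicValNat.prime_pow,
      padicValNat.eq_zero_of_not_dvd (by omega), add_zero]
  rw [Z, hv, Nat.mul_div_cancel_left a two_pos, h, Nat.mul_div_cancel_left w (by positivity)]

theorem stmt_8 (k : ℕ) (hk : 5 ≤ k) (n : ℕ) (hn : n = 2 ^ k + 5) :
    Z n % 8 = 5 := by
  obtain ⟨u, hu, hu8⟩ := two_pow_factorial k (by omega)
  obtain ⟨t, ht⟩ : ∃ t, 2 ^ k = 32 * t := pow_dvd_pow 2 hk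
  have hpow : 2 ^ 2 ^ k = 4 ^ (16 * t) := by
    rw [ht, show 32 * t = 2 * (16 * t) by ring, pow_mul]; norm_num
  rw [hpow] at hu
  set w := u * ((32 * t + 1) * (16 * t + 1) * (32 * t + 3) * (8 * t + 1) * (32 * t + 5)) with hw
  have hw8 : w % 8 = 5 := by
    have h0 : u ≡ 3 [MOD 8] := hu8
    have h1 : 32 * t + 1 ≡ 1 [MOD 8] := by unfold Nat.ModEq; omega
    have h2 : 16 * t + 1 ≡ 1 [MOD 8] := by unfold Nat.ModEq; omega
    have h3 : 32 * t + 3 ≡ 3 [MOD 8] := by unfold Nat.ModEq; omega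
    have h4 : 8 * t + 1 ≡ 1 [MOD 8] := by unfold Nat.ModEq; omega
    have h5 : 32 * t + 5 ≡ 5 [MOD 8] := by unfold Nat.ModEq; omega
    exact h0.mul ((((h1.mul h2).mul h3).mul h4).mul h5)
  have hfac : Nat.factorial n = 4 ^ (16 * t + 1) * w := by
    rw [hn]
    simp only [Nat.factorial_succ]
    rw [ht] at hu ⊢
    rw [hw, pow_succ]
    linear_combination
      (4 * ((32 * t + 1) * (16 * t + 1) * (32 * t + 3) * (8 * t + 1) * (32 * t + 5))) * hu
  rw [Z_eq_of_factorial_eq hfac (by omega), hw8]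
end

section
/- For every k ≥ 0, if n = (4/5)·(16^{2k+1} − 1) (a natural number), then n! cannot be written as a sum of three squares of integers. -/
/-!
An integer of the form `4 ^ s * u` with `u ≡ 7 [MOD 8]` is not a sum of three squares, so it is
enough to put `n !` in this form. In base 16 the number `n` consists of `2 * k + 1` digits `12`,
so it is the term of index `2 * k + 1` of the sequence `0 ↦ 12 ↦ 204 ↦ ⋯` given by
`m ↦ 16 * m + 12`. If `4 ∣ m`, applying `(2 * t)! = 2 ^ t * t ! * (1 * 3 * ⋯ * (2 * t - 1))` and its
companion for `(2 * t + 1)!` four times gives `(16 * m + 12)! = 2 ^ (15 * m + 10) * m ! * w`, where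
`w` is a product of four products of initial odd numbers. Four consecutive odd numbers multiply to
`1` modulo `8`, which yields `w ≡ 3 * 7 * 3 * 1 ≡ 7 [MOD 8]`. The exponent is even, so each step
multiplies the factorial by a power of `4` and by a number congruent to `7` modulo `8`; after an odd
number of steps the cofactor is `7 ^ (2 * k + 1) ≡ 7 [MOD 8]`.
-/

/-- The product `1 * 3 * ⋯ * (2 * m - 1)` of the first `m` odd numbers. -/
def oddProd (m : ℕ) : ℕ := ∏ i ∈ Finset.range m, (2 * i + 1)

lemma oddProd_succ (m : ℕ) : oddProd (m + 1) = oddProd m * (2 * m + 1) :=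
  Finset.prod_range_succ _ _

open Nat in
lemma factorial_two_mul_eq_s11 (m : ℕ) : (2 * m)! = 2 ^ m * m ! * oddProd m := by
  induction m with
  | zero => simp [oddProd]
  | succ m ih =>
    rw [show 2 * (m + 1) = 2 * m + 1 + 1 by ring, factorial_succ, factorial_succ, ih,
      oddProd_succ, factorial_succ]
    ring

open Nat in
lemma factorial_two_mul_add_one_eq (m : ℕ) :
    (2 * m + 1)! = 2 ^ m * m ! * oddProd (m + 1) := by
  rw [factorial_succ, factorial_two_mul_eq_s11, oddProd_succ]
  ring

lemma oddProd_add_four (m : ℕ) : oddProd (m + 4) ≡ oddProd m [MOD 8] := by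
  have h : (2 * m + 1) * (2 * (m + 1) + 1) * (2 * (m + 2) + 1) * (2 * (m + 3) + 1) ≡ 1 [MOD 8] := by
    have h4 : m % 4 < 4 := Nat.mod_lt _ (by norm_num)
    obtain ⟨q, r, hr, rfl⟩ : ∃ q r, r < 4 ∧ m = 4 * q + r := ⟨m / 4, m % 4, h4, by omega⟩
    have e (i : ℕ) : 2 * (4 * q + r + i) + 1 ≡ 2 * (r + i) + 1 [MOD 8] := by
      unfold Nat.ModEq; omega
    refine ((((e 0).mul (e 1)).mul (e 2)).mul (e 3)).trans ?_
    interval_cases r <;> decide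
  have := h.mul_left (oddProd m)
  rw [mul_one] at this
  rw [oddProd_succ, oddProd_succ, oddProd_succ, oddProd_succ]
  simpa only [mul_assoc] using this

lemma oddProd_four_mul_add (q r : ℕ) : oddProd (4 * q + r) ≡ oddProd r [MOD 8] := by
  induction q with
  | zero => simp [Nat.ModEq]
  | succ q ih =>
    rw [show 4 * (q + 1) + r = 4 * q + r + 4 by ring]
    exact (oddProd_add_four _).trans ih

open Nat in
/-- Appending the base-16 digit `12` to a multiple of `4` multiplies its factorial by a power of `4`
and by a number congruent to `7` modulo `8`. -/
lemma factorial_step (m : ℕ) (hm : 4 ∣ m) :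
    ∃ s w, (16 * m + 12)! = 4 ^ s * m ! * w ∧ w ≡ 7 [MOD 8] := by
  obtain ⟨q, rfl⟩ := hm
  refine ⟨30 * q + 5, oddProd (4 * (8 * q + 1) + 2) * oddProd (4 * (4 * q) + 3) *
    oddProd (4 * (2 * q) + 2) * oddProd (4 * q + 1), ?_, ?_⟩
  · have h1 := factorial_two_mul_eq_s11 (32 * q + 6)
    have h2 := factorial_two_mul_eq_s11 (16 * q + 3)
    have h3 := factorial_two_mul_add_one_eq (8 * q + 1)
    have h4 := factorial_two_mul_add_one_eq (4 * q)
    ring_nf at h1 h2 h3 h4 ⊢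
    have e : 4 ^ (q * 30) = 2 ^ (2 * (q * 30)) := (pow_mul 2 2 (q * 30)).symm
    rw [h1, h2, h3, h4, e]
    ring
  · refine ((((oddProd_four_mul_add _ _).mul (oddProd_four_mul_add _ _)).mul
      (oddProd_four_mul_add _ _)).mul (oddProd_four_mul_add _ _)).trans ?_
    decide

open Nat in
/-- The number whose base-16 expansion is `j` digits `12` is `12 * (16 ^ j - 1) / 15`; it is encoded
here by `5 * n + 4 = 4 * 16 ^ j`. -/
lemma factorial_form (j : ℕ) : ∀ n : ℕ, 5 * n + 4 = 4 * 16 ^ j →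
    ∃ s u, n ! = 4 ^ s * u ∧ u ≡ 7 ^ j [MOD 8] := by
  induction j with
  | zero =>
    intro n hn
    obtain rfl : n = 0 := by omega
    exact ⟨0, 1, by simp, by decide⟩
  | succ j ih =>
    intro n hn
    rw [pow_succ] at hn
    -- `16 ^ j ≡ 1` modulo `5` gives the preceding term `m` of the sequence.
    have h5 : 16 ^ j % 5 = 1 := by simp [Nat.pow_mod]
    obtain ⟨m, hm⟩ : ∃ m, 5 * m + 4 = 4 * 16 ^ j := ⟨4 * 16 ^ j / 5, by omega⟩
    obtain rfl : n = 16 * m + 12 := by omega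
    obtain ⟨s, u, hu, hu'⟩ := ih m hm
    obtain ⟨t, w, hw, hw'⟩ := factorial_step m (by omega)
    refine ⟨t + s, u * w, by rw [hw, hu]; ring, ?_⟩
    rw [pow_succ]
    exact hu'.mul hw'

lemma sq_emod_eight (a : ℤ) :
    (a % 2 = 0 ∧ (a ^ 2 % 8 = 0 ∨ a ^ 2 % 8 = 4)) ∨ (a % 2 = 1 ∧ a ^ 2 % 8 = 1) := by
  have h : a % 8 = 0 ∨ a % 8 = 1 ∨ a % 8 = 2 ∨ a % 8 = 3 ∨ a % 8 = 4 ∨ a % 8 = 5 ∨ a % 8 = 6 ∨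
      a % 8 = 7 := by omega
  rcases h with h | h | h | h | h | h | h | h <;> simp [pow_two, Int.mul_emod, h] <;> omega

/-- The easy direction of Legendre's three-square theorem. -/
lemma not_three_squares (u : ℤ) (hu : u % 8 = 7) (s : ℕ) :
    ∀ a b c : ℤ, 4 ^ s * u ≠ a ^ 2 + b ^ 2 + c ^ 2 := by
  induction s with
  | zero =>
    intro a b c h
    have := sq_emod_eight a
    have := sq_emod_eight b
    have := sq_emod_eight c
    omega
  | succ s ih =>
    intro a b c h
    rw [pow_succ, mul_right_comm] at h
    have ha := sq_emod_eight a
    have hb := sq_emod_eight b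
    have hc := sq_emod_eight c
    -- A sum of three squares divisible by `4` has all three terms even.
    obtain ⟨x, rfl⟩ : ∃ x, a = 2 * x := ⟨a / 2, by omega⟩
    obtain ⟨y, rfl⟩ : ∃ y, b = 2 * y := ⟨b / 2, by omega⟩
    obtain ⟨z, rfl⟩ : ∃ z, c = 2 * z := ⟨c / 2, by omega⟩
    exact ih x y z (by linarith)

open Nat in
theorem stmt_11 (k : ℕ) (n : ℕ) (hn : n = 4 * (16 ^ (2 * k + 1) - 1) / 5) :
    ¬ ∃ a b c : ℤ, (n ! : ℤ) = a ^ 2 + b ^ 2 + c ^ 2 := by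
  rintro ⟨a, b, c, h⟩
  have h5 : 16 ^ (2 * k + 1) % 5 = 1 := by simp [Nat.pow_mod]
  obtain ⟨s, u, hu, hu'⟩ := factorial_form (2 * k + 1) n (by omega)
  have h7 : u % 8 = 7 := by
    have : 7 ^ (2 * k + 1) % 8 = 7 := by
      rw [pow_succ, pow_mul, Nat.mul_mod, Nat.pow_mod]
      simp
    exact Eq.trans hu' this
  refine not_three_squares u (by omega) s a b c ?_
  rw [← h, hu]
  push_cast
  ring
end
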